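/- Let J := (1/π)·∫_0^π cos(cos t) dt, k_a := 2(cos 1 − J)/(cos 1 − sin 1), and k_b := (1 − J)/(1 − sin 1). Then (√2·sin(√2/2) − sin 1)·(k_a − k_b) ≤ 9.6·10⁻⁴. -/

import Mathlib

open Real MeasureTheory intervalIntegral

/-!
The numbers `cos 1`, `sin 1 = sinc 1`, `√2 sin (√2/2) = sinc (√2/2)` and `J₀(1)` are all values of
series `∑ (-1)ᵏ yᵏ / dₖ` with `y = x²` or `y = (x/2)²`, whose terms decrease in absolute value for
small `y`. Consecutive partial sums therefore enclose each of them, and at most seven terms locate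
them to within `10⁻⁶`. For `J₀` the series comes from integrating the one for `cos (x cos t)`
termwise, using `∫₀^π cos²ᵏ = π (2k)! / (4ᵏ k!²)`.
-/

lemma mem_Icc_of_hasSum_alternating {f : ℕ → ℝ} {l : ℝ} (hf : Antitone f)
    (hl : HasSum (fun k ↦ (-1) ^ k * f k) l) (n : ℕ) :
    l ∈ Set.Icc (∑ k ∈ Finset.range (2 * n), (-1) ^ k * f k)
      (∑ k ∈ Finset.range (2 * n + 1), (-1) ^ k * f k) :=
  ⟨hf.alternating_series_le_tendsto hl.tendsto_sum_nat n,
    hf.tendsto_le_alternating_series hl.tendsto_sum_nat n⟩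

lemma antitone_pow_div {y : ℝ} {d : ℕ → ℝ} (hy : 0 ≤ y) (hd : ∀ k, 0 < d k)
    (hyd : ∀ k, y * d k ≤ d (k + 1)) : Antitone fun k ↦ y ^ k / d k := by
  refine antitone_nat_of_succ_le fun k ↦ ?_
  rw [div_le_div_iff₀ (hd _) (hd _), pow_succ, mul_assoc]
  exact mul_le_mul_of_nonneg_left (hyd k) (pow_nonneg hy k)

lemma hasSum_cos_sq_pow (x : ℝ) :
    HasSum (fun k : ℕ ↦ (-1) ^ k * ((x ^ 2) ^ k / (2 * k).factorial)) (cos x) := by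
  simpa only [pow_mul, mul_div_assoc] using Real.hasSum_cos x

lemma hasSum_sinc_sq_pow (x : ℝ) :
    HasSum (fun k : ℕ ↦ (-1) ^ k * ((x ^ 2) ^ k / (2 * k + 1).factorial)) (sinc x) := by
  rcases eq_or_ne x 0 with rfl | hx
  · convert hasSum_single (f := fun k : ℕ ↦
      (-1 : ℝ) ^ k * (((0 : ℝ) ^ 2) ^ k / (2 * k + 1).factorial)) 0 fun k hk ↦ ?_ using 1
    · simp
    · simp [hk]
  · rw [sinc_of_ne_zero hx]
    refine ((Real.hasSum_sin x).div_const x).congr_fun fun k ↦ ?_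
    field_simp
    ring

lemma cos_mem_Icc_of_sq_le_two {x : ℝ} (hx : x ^ 2 ≤ 2) (n : ℕ) :
    cos x ∈ Set.Icc
      (∑ k ∈ Finset.range (2 * n), (-1) ^ k * ((x ^ 2) ^ k / (2 * k).factorial))
      (∑ k ∈ Finset.range (2 * n + 1), (-1) ^ k * ((x ^ 2) ^ k / (2 * k).factorial)) := by
  refine mem_Icc_of_hasSum_alternating
    (antitone_pow_div (sq_nonneg x) (fun k ↦ by positivity) fun k ↦ ?_) (hasSum_cos_sq_pow x) n
  have ratio : (((2 * (k + 1)).factorial : ℕ) : ℝ)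
      = (2 * k + 2) * (2 * k + 1) * (2 * k).factorial := by
    rw [mul_add_one, Nat.factorial_succ, Nat.factorial_succ]
    push_cast
    ring
  rw [ratio]
  gcongr
  nlinarith [k.cast_nonneg (α := ℝ)]

lemma sinc_mem_Icc_of_sq_le_six {x : ℝ} (hx : x ^ 2 ≤ 6) (n : ℕ) :
    sinc x ∈ Set.Icc
      (∑ k ∈ Finset.range (2 * n), (-1) ^ k * ((x ^ 2) ^ k / (2 * k + 1).factorial))
      (∑ k ∈ Finset.range (2 * n + 1), (-1) ^ k * ((x ^ 2) ^ k / (2 * k + 1).factorial)) := by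
  refine mem_Icc_of_hasSum_alternating
    (antitone_pow_div (sq_nonneg x) (fun k ↦ by positivity) fun k ↦ ?_) (hasSum_sinc_sq_pow x) n
  have ratio : (((2 * (k + 1) + 1).factorial : ℕ) : ℝ)
      = (2 * k + 3) * (2 * k + 2) * (2 * k + 1).factorial := by
    rw [mul_add_one, Nat.factorial_succ, Nat.factorial_succ]
    push_cast
    ring
  rw [ratio]
  gcongr
  nlinarith [k.cast_nonneg (α := ℝ)]

lemma integral_cos_pow_two_mul (k : ℕ) :
    ∫ t in 0..π, cos t ^ (2 * k) = π * ((2 * k).factorial / (4 ^ k * k.factorial ^ 2)) := by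
  induction k with
  | zero => simp
  | succ k ih =>
    rw [mul_add_one, integral_cos_pow, ih, Nat.factorial_succ, Nat.factorial_succ,
      Nat.factorial_succ]
    simp only [sin_pi, sin_zero, mul_zero, sub_zero, zero_div, zero_add]
    push_cast
    field_simp
    ring

/-- The Bessel function `J₀` of the first kind of order zero, restricted to the real line and
defined by its integral representation. -/
noncomputable def besselJZero (x : ℝ) : ℝ :=
  1 / π * ∫ t in 0..π, cos (x * cos t)

lemma hasSum_integral_cos_mul_cos (x : ℝ) :
    HasSum (fun k : ℕ ↦ ∫ t in 0..π, (-1) ^ k * (((x * cos t) ^ 2) ^ k / (2 * k).factorial))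
      (∫ t in 0..π, cos (x * cos t)) := by
  have summable_bound : Summable fun k : ℕ ↦ (x ^ 2) ^ k / (2 * k).factorial := by
    simpa only [pow_mul] using (Real.hasSum_cosh x).summable
  refine intervalIntegral.hasSum_integral_of_dominated_convergence
    (fun k _ ↦ (x ^ 2) ^ k / (2 * k).factorial) (fun k ↦ ?_)
    (fun k ↦ ae_of_all _ fun t _ ↦ ?_) (ae_of_all _ fun _ _ ↦ summable_bound)
    intervalIntegrable_const (ae_of_all _ fun t _ ↦ hasSum_cos_sq_pow _)
  · exact Continuous.aestronglyMeasurable (by fun_prop)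
  · have hsq : (x * cos t) ^ 2 ≤ x ^ 2 := by
      rw [mul_pow]
      exact mul_le_of_le_one_right (sq_nonneg x) (cos_sq_le_one t)
    rw [norm_mul, norm_pow, norm_neg, norm_one, one_pow, one_mul, norm_of_nonneg (by positivity)]
    gcongr

lemma hasSum_besselJZero (x : ℝ) :
    HasSum (fun k : ℕ ↦ (-1) ^ k * (((x / 2) ^ 2) ^ k / k.factorial ^ 2)) (besselJZero x) := by
  refine ((hasSum_integral_cos_mul_cos x).mul_left (1 / π)).congr_fun fun k ↦ ?_
  have split (t : ℝ) : (-1) ^ k * (((x * cos t) ^ 2) ^ k / (2 * k).factorial)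
      = (-1) ^ k * ((x ^ 2) ^ k / (2 * k).factorial) * cos t ^ (2 * k) := by ring
  simp only [split, intervalIntegral.integral_const_mul, integral_cos_pow_two_mul, div_pow]
  field_simp
  norm_num

lemma besselJZero_mem_Icc_of_sq_le_four {x : ℝ} (hx : x ^ 2 ≤ 4) (n : ℕ) :
    besselJZero x ∈ Set.Icc
      (∑ k ∈ Finset.range (2 * n), (-1) ^ k * (((x / 2) ^ 2) ^ k / k.factorial ^ 2))
      (∑ k ∈ Finset.range (2 * n + 1), (-1) ^ k * (((x / 2) ^ 2) ^ k / k.factorial ^ 2)) := by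
  refine mem_Icc_of_hasSum_alternating
    (antitone_pow_div (sq_nonneg _) (fun k ↦ by positivity) fun k ↦ ?_) (hasSum_besselJZero x) n
  rw [Nat.factorial_succ, Nat.cast_mul, mul_pow]
  refine mul_le_mul_of_nonneg_right ?_ (sq_nonneg _)
  push_cast
  nlinarith [k.cast_nonneg (α := ℝ)]

lemma sqrt_two_mul_sin_eq_sinc : √2 * sin (√2 / 2) = sinc (√2 / 2) := by
  rw [sinc_of_ne_zero (by positivity), eq_div_iff (by positivity)]
  linear_combination sin (√2 / 2) / 2 * sq_sqrt (zero_le_two (α := ℝ))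

lemma cos_one_mem_Icc : cos 1 ∈ Set.Icc 0.540302 0.540303 := by
  refine Set.Icc_subset_Icc ?_ ?_ (cos_mem_Icc_of_sq_le_two (by norm_num) 3) <;>
    norm_num [Finset.sum_range_succ, Nat.factorial]

lemma sin_one_mem_Icc : sin 1 ∈ Set.Icc 0.84147 0.841471 := by
  rw [← div_one (sin 1), ← sinc_of_ne_zero one_ne_zero]
  refine Set.Icc_subset_Icc ?_ ?_ (sinc_mem_Icc_of_sq_le_six (by norm_num) 3) <;>
    norm_num [Finset.sum_range_succ, Nat.factorial]

lemma sqrt_two_mul_sin_mem_Icc : √2 * sin (√2 / 2) ∈ Set.Icc 0.918725 0.918726 := by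
  have hsq : (√2 / 2) ^ 2 = 1 / 2 := by rw [div_pow, sq_sqrt zero_le_two]; norm_num
  rw [sqrt_two_mul_sin_eq_sinc]
  refine Set.Icc_subset_Icc ?_ ?_ (sinc_mem_Icc_of_sq_le_six (by rw [hsq]; norm_num) 3) <;>
    norm_num [hsq, Finset.sum_range_succ, Nat.factorial]

lemma besselJZero_one_le : besselJZero 1 ≤ 0.765198 :=
  (besselJZero_mem_Icc_of_sq_le_four (by norm_num) 2).2.trans <| by
    norm_num [Finset.sum_range_succ, Nat.factorial]

theorem stmt_18 (J ka kb : ℝ)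
    (hJ : J = (1 / π) * ∫ t in (0:ℝ)..π, Real.cos (Real.cos t))
    (hka : ka = 2 * (Real.cos 1 - J) / (Real.cos 1 - Real.sin 1))
    (hkb : kb = (1 - J) / (1 - Real.sin 1)) :
    (Real.sqrt 2 * Real.sin (Real.sqrt 2 / 2) - Real.sin 1) * (ka - kb) ≤ 9.6 * 10 ^ (-4 : ℤ) := by
  have hJ_bessel : J = besselJZero 1 := by simp only [hJ, besselJZero, one_mul]
  have J_le : J ≤ 0.765198 := hJ_bessel ▸ besselJZero_one_le
  obtain ⟨le_cos, cos_le⟩ := cos_one_mem_Icc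
  obtain ⟨le_sin, sin_le⟩ := sin_one_mem_Icc
  obtain ⟨le_A, A_le⟩ := sqrt_two_mul_sin_mem_Icc
  have ka_le : ka ≤ 1.4935 := by
    rw [hka, div_le_iff_of_neg (by linarith)]
    linarith
  have le_kb : 1.4811 ≤ kb := by
    rw [hkb, le_div_iff₀ (by linarith)]
    linarith
  calc (√2 * sin (√2 / 2) - sin 1) * (ka - kb)
      ≤ (√2 * sin (√2 / 2) - sin 1) * (1.4935 - 1.4811) := by gcongr; linarith
    _ ≤ (0.918726 - 0.84147) * (1.4935 - 1.4811) := by gcongr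
    _ ≤ 9.6 * 10 ^ (-4 : ℤ) := by norm_num
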